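/- Let Q ∈ ℝ^{p×k} and R ∈ ℝ^{p×(p−k)} satisfy RᵀQ = 0 and [Q R] invertible, and let A ∈ ℝ^{p×p} be symmetric positive definite. Then for every z ∈ ℝ^p, zᵀR(RᵀAR)⁻¹Rᵀz ≤ λ_max(A⁻¹)‖z‖₂²; equivalently, λ_max(R(RᵀAR)⁻¹Rᵀ) ≤ λ_max(A⁻¹). -/

import Mathlib

open Matrix

noncomputable section

/-- The square block matrix `[Q R]` obtained by concatenating the columns of
`Q ∈ ℝ^{p×k}` and `R ∈ ℝ^{p×(p-k)}`. -/
def blockQR {p k : ℕ} (Q : Matrix (Fin p) (Fin k) ℝ) (R : Matrix (Fin p) (Fin (p - k)) ℝ) :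
    Matrix (Fin p) (Fin p) ℝ :=
  Matrix.of fun i j =>
    if h : (j : ℕ) < k then Q i ⟨j, h⟩
    else R i ⟨(j : ℕ) - k, by have := j.isLt; omega⟩

/-- Lemma S2, eq. (S-716-det): if `RᵀQ = 0`, `[Q R]` is invertible and `A` is
symmetric positive definite, then `zᵀR(RᵀAR)⁻¹Rᵀz ≤ λ_max(A⁻¹)‖z‖₂²` for every `z`, i.e.
`λ_max(R(RᵀAR)⁻¹Rᵀ) ≤ λ_max(A⁻¹)`. The largest eigenvalue of the symmetric matrix `A⁻¹` is
characterized through its quadratic form: `c ≥ λ_max(A⁻¹)` iff `zᵀA⁻¹z ≤ c‖z‖²` for all `z`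
(taking `c = λ_max(A⁻¹)` recovers the literal statement). -/
theorem statement_7 {p k : ℕ} (hk : k < p)
    (Q : Matrix (Fin p) (Fin k) ℝ) (R : Matrix (Fin p) (Fin (p - k)) ℝ)
    (hRQ : Rᵀ * Q = 0) (hQR : IsUnit (blockQR Q R).det)
    (A : Matrix (Fin p) (Fin p) ℝ) (hA : A.PosDef)
    (c : ℝ) (hc : ∀ z : Fin p → ℝ, z ⬝ᵥ (A⁻¹ *ᵥ z) ≤ c * (z ⬝ᵥ z)) :
    ∀ z : Fin p → ℝ, z ⬝ᵥ ((R * (Rᵀ * A * R)⁻¹ * Rᵀ) *ᵥ z) ≤ c * (z ⬝ᵥ z) := by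
  intro z
  refine le_trans ?_ (hc z)
  have hAu : IsUnit A.det := (Matrix.isUnit_iff_isUnit_det A).1 hA.isUnit
  have hAT : Aᵀ = A := by
    have h := hA.isHermitian
    rwa [Matrix.IsHermitian, Matrix.conjTranspose_eq_transpose_of_trivial] at h
  have hsym : ∀ x y : Fin p → ℝ, x ⬝ᵥ (A *ᵥ y) = (A *ᵥ x) ⬝ᵥ y := by
    intro x y
    rw [Matrix.dotProduct_mulVec, ← Matrix.mulVec_transpose, hAT]
  have hpos : ∀ x : Fin p → ℝ, 0 ≤ x ⬝ᵥ (A *ᵥ x) := by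
    intro x
    simpa using hA.posSemidef.dotProduct_mulVec_nonneg x
  obtain ⟨u, hu⟩ : ∃ u, u = A⁻¹ *ᵥ z := ⟨_, rfl⟩
  have hz : A *ᵥ u = z := by
    rw [hu, Matrix.mulVec_mulVec, Matrix.mul_nonsing_inv _ hAu, Matrix.one_mulVec]
  rw [← hu]
  by_cases hM : IsUnit (Rᵀ * A * R).det
  · obtain ⟨y, hy⟩ : ∃ y, y = (Rᵀ * A * R)⁻¹ *ᵥ (Rᵀ *ᵥ z) := ⟨_, rfl⟩
    have hMy : (Rᵀ * A * R) *ᵥ y = Rᵀ *ᵥ z := by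
      rw [hy, Matrix.mulVec_mulVec, Matrix.mul_nonsing_inv _ hM, Matrix.one_mulVec]
    have hw : (R * (Rᵀ * A * R)⁻¹ * Rᵀ) *ᵥ z = R *ᵥ y := by
      rw [hy, Matrix.mulVec_mulVec, Matrix.mulVec_mulVec, Matrix.mul_assoc]
    rw [hw]
    have hR : ∀ x : Fin p → ℝ, (R *ᵥ y) ⬝ᵥ x = y ⬝ᵥ (Rᵀ *ᵥ x) := by
      intro x
      rw [Matrix.dotProduct_mulVec, Matrix.vecMul_transpose]
    have h1 : (R *ᵥ y) ⬝ᵥ (A *ᵥ (R *ᵥ y)) = z ⬝ᵥ (R *ᵥ y) := by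
      rw [hR, dotProduct_comm z, hR, ← hMy]
      simp only [Matrix.mulVec_mulVec, Matrix.mul_assoc]
    have h2 := hpos (u - R *ᵥ y)
    rw [Matrix.mulVec_sub, sub_dotProduct, dotProduct_sub, dotProduct_sub, h1, hsym u (R *ᵥ y), hz,
      dotProduct_comm u z, dotProduct_comm (R *ᵥ y) z] at h2
    linarith
  · rw [Matrix.nonsing_inv_apply_not_isUnit _ hM]
    have h2 := hpos u
    rw [hz, dotProduct_comm] at h2
    simpa using h2
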